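/- arXiv:2103.15993 — 10 statements merged into one kernel-verified Lean document; each statement's English description precedes it below -/
import Mathlib

section
/- Let φ : ℝⁿ → ℝ be continuous and ψ : ℝⁿ → ℝ ∪ {+∞} be proper, lower semicontinuous, with ψ(0) finite. Define p(Δ) := inf_{‖s‖ ≤ Δ} (φ(s) + ψ(s)) for Δ ≥ 0 (so p(0) = φ(0) + ψ(0)). Then p(Δ) is finite for every Δ ≥ 0 and the function Δ ↦ p(Δ) is lower semicontinuous on [0, ∞). -/
open Set

/-- With `φ` continuous, `ψ` proper lsc and finite at `0`, the value function
`p(Δ) = inf_{‖s‖ ≤ Δ} (φ s + ψ s)` is finite for every `Δ ≥ 0` and is lower semicontinuous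
on `[0, ∞)`. -/
theorem stmt_1 (n : ℕ)
    (φ : EuclideanSpace ℝ (Fin n) → ℝ) (hφ : Continuous φ)
    (ψ : EuclideanSpace ℝ (Fin n) → EReal)
    (hψ_ne_bot : ∀ s, ψ s ≠ ⊥)
    (hψ_lsc : LowerSemicontinuous ψ)
    (hψ0 : ψ 0 ≠ ⊤)
    (p : ℝ → EReal)
    (hp : ∀ Δ : ℝ,
      p Δ = ⨅ s ∈ {s : EuclideanSpace ℝ (Fin n) | ‖s‖ ≤ Δ}, ((φ s : EReal) + ψ s)) :
    (∀ Δ : ℝ, 0 ≤ Δ → ∃ r : ℝ, p Δ = (r : EReal)) ∧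
    LowerSemicontinuousOn p (Ici (0 : ℝ)) := by
  have hf : LowerSemicontinuous (fun s => (φ s : EReal) + ψ s) := by
    refine LowerSemicontinuous.add'
      (continuous_coe_real_ereal.comp hφ).lowerSemicontinuous hψ_lsc ?_
    intro x
    exact EReal.continuousAt_add (Or.inl (EReal.coe_ne_top _)) (Or.inl (EReal.coe_ne_bot _))
  have hmin : ∀ Δ : ℝ, 0 ≤ Δ → ∃ s : EuclideanSpace ℝ (Fin n), ‖s‖ ≤ Δ ∧
      p Δ = (φ s : EReal) + ψ s := by
    intro Δ hΔ
    obtain ⟨s, hs, hm⟩ := LowerSemicontinuousOn.exists_isMinOn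
      (s := Metric.closedBall (0 : EuclideanSpace ℝ (Fin n)) Δ)
      ⟨0, by simpa using hΔ⟩ (isCompact_closedBall _ _) (hf.lowerSemicontinuousOn _)
    have hs' : ‖s‖ ≤ Δ := by simpa using hs
    refine ⟨s, hs', ?_⟩
    rw [hp]
    apply le_antisymm
    · exact iInf₂_le s hs'
    · refine le_iInf₂ fun t ht => hm ?_
      have ht' : ‖t‖ ≤ Δ := ht
      simpa using ht'
  refine ⟨?_, ?_⟩
  · intro Δ hΔ
    obtain ⟨s, hs, he⟩ := hmin Δ hΔ
    have h1 : p Δ ≠ ⊥ := by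
      rw [he, Ne, EReal.add_eq_bot_iff]
      simp [hψ_ne_bot]
    have h2 : p Δ ≠ ⊤ := by
      have hle : p Δ ≤ (φ 0 : EReal) + ψ 0 := by
        rw [hp]
        exact iInf₂_le (0 : EuclideanSpace ℝ (Fin n)) (by simpa using hΔ)
      exact ne_top_of_le_ne_top (EReal.add_ne_top (EReal.coe_ne_top _) hψ0) hle
    exact ⟨(p Δ).toReal, (EReal.coe_toReal h2 h1).symm⟩
  · intro Δ₀ hΔ₀ y hy
    have hΔ₀' : (0 : ℝ) ≤ Δ₀ := hΔ₀
    have hopen := hf.isOpen_preimage y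
    obtain ⟨δ, hδ, hsub⟩ := (isCompact_closedBall
      (0 : EuclideanSpace ℝ (Fin n)) Δ₀).exists_thickening_subset_open hopen (by
        intro s hs
        have hs' : ‖s‖ ≤ Δ₀ := by simpa using hs
        refine lt_of_lt_of_le hy ?_
        rw [hp]
        exact iInf₂_le s hs')
    rw [thickening_closedBall hδ hΔ₀'] at hsub
    filter_upwards [self_mem_nhdsWithin,
      mem_nhdsWithin_of_mem_nhds (Iio_mem_nhds (show Δ₀ < Δ₀ + δ by linarith))] with Δ h0 h1
    obtain ⟨s, hs, he⟩ := hmin Δ h0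
    have h1' : Δ < Δ₀ + δ := h1
    rw [he]
    exact hsub (show s ∈ Metric.ball _ _ by rw [mem_ball_zero_iff]; linarith)
end

section
/- Let φ : ℝⁿ → ℝ be continuous and ψ : ℝⁿ → ℝ ∪ {+∞} be proper, lower semicontinuous, with ψ(0) finite. Let p(Δ) := inf_{‖s‖ ≤ Δ} (φ(s) + ψ(s)) and P(Δ) := argmin_{‖s‖ ≤ Δ} (φ(s) + ψ(s)). Suppose Δ_k → Δ̄ ≥ 0 with Δ_k ≥ 0, p(Δ_k) → p(Δ̄), and s_k ∈ P(Δ_k) for each k. Then the sequence (s_k) is bounded and every cluster point of (s_k) belongs to P(Δ̄). -/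
open Set Filter

/-- Outer semicontinuity of the trust-region solution map: if `Δ_k → Δ̄ ≥ 0`,
`p(Δ_k) → p(Δ̄)` and `s_k ∈ P(Δ_k)`, then `(s_k)` is bounded and all its cluster points
belong to `P(Δ̄)`. -/
theorem stmt_2 (n : ℕ)
    (φ : EuclideanSpace ℝ (Fin n) → ℝ) (hφ : Continuous φ)
    (ψ : EuclideanSpace ℝ (Fin n) → EReal)
    (hψ_ne_bot : ∀ s, ψ s ≠ ⊥)
    (hψ_lsc : LowerSemicontinuous ψ)
    (hψ0 : ψ 0 ≠ ⊤)
    (p : ℝ → EReal)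
    (hp : ∀ Δ : ℝ,
      p Δ = ⨅ s ∈ {s : EuclideanSpace ℝ (Fin n) | ‖s‖ ≤ Δ}, ((φ s : EReal) + ψ s))
    (P : ℝ → Set (EuclideanSpace ℝ (Fin n)))
    (hP : ∀ Δ : ℝ, P Δ = {s : EuclideanSpace ℝ (Fin n) | ‖s‖ ≤ Δ ∧
      ∀ t, ‖t‖ ≤ Δ → (φ s : EReal) + ψ s ≤ (φ t : EReal) + ψ t})
    (Δbar : ℝ) (hΔbar : 0 ≤ Δbar)
    (Δ : ℕ → ℝ) (hΔnn : ∀ k, 0 ≤ Δ k)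
    (hΔto : Tendsto Δ atTop (nhds Δbar))
    (hpto : Tendsto (fun k => p (Δ k)) atTop (nhds (p Δbar)))
    (s : ℕ → EuclideanSpace ℝ (Fin n)) (hs : ∀ k, s k ∈ P (Δ k)) :
    Bornology.IsBounded (Set.range s) ∧
    ∀ a : EuclideanSpace ℝ (Fin n), MapClusterPt a atTop s → a ∈ P Δbar := by
  have hf : LowerSemicontinuous (fun s => (φ s : EReal) + ψ s) := by
    have h1 : LowerSemicontinuous (fun s => (φ s : EReal)) :=
      (continuous_coe_real_ereal.comp hφ).lowerSemicontinuous
    refine h1.add' hψ_lsc fun x => EReal.continuousAt_add ?_ ?_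
    · exact Or.inl (EReal.coe_ne_top _)
    · exact Or.inl (EReal.coe_ne_bot _)
  have hs' : ∀ k, ‖s k‖ ≤ Δ k ∧
      ∀ t, ‖t‖ ≤ Δ k → (φ (s k) : EReal) + ψ (s k) ≤ (φ t : EReal) + ψ t := by
    intro k
    have h := hs k
    rw [hP] at h
    exact h
  have hpk : ∀ k, (φ (s k) : EReal) + ψ (s k) ≤ p (Δ k) := by
    intro k
    rw [hp]
    exact le_iInf₂ fun t ht => (hs' k).2 t ht
  constructor
  · obtain ⟨M, hM⟩ := hΔto.bddAbove_range
    rw [isBounded_iff_forall_norm_le]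
    refine ⟨M, ?_⟩
    rintro _ ⟨k, rfl⟩
    exact (hs' k).1.trans (hM ⟨k, rfl⟩)
  · intro a ha
    rw [hP]
    refine ⟨?_, fun t ht => ?_⟩
    · by_contra! hlt
      obtain ⟨c, hc1, hc2⟩ := exists_between hlt
      have h1 : ∀ᶠ k in atTop, Δ k < c := hΔto.eventually_lt_const hc1
      have h2 : ∃ᶠ k in atTop, c < ‖s k‖ :=
        ha.frequently (continuous_norm.continuousAt.eventually_const_lt hc2)
      obtain ⟨k, hk2, hk1⟩ := (h2.and_eventually h1).exists
      exact absurd (hs' k).1 (not_le.mpr (hk1.trans hk2))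
    · have hle : p Δbar ≤ (φ t : EReal) + ψ t := by
        rw [hp]
        exact iInf₂_le t ht
      refine le_trans ?_ hle
      by_contra! hlt
      obtain ⟨c, hc1, hc2⟩ := exists_between hlt
      have h1 : ∀ᶠ k in atTop, p (Δ k) < c := hpto.eventually_lt_const hc1
      have h2 : ∃ᶠ k in atTop, c < (φ (s k) : EReal) + ψ (s k) :=
        ha.frequently (hf a c hc2)
      obtain ⟨k, hk2, hk1⟩ := (h2.and_eventually h1).exists
      exact absurd (hpk k) (not_le.mpr (hk1.trans hk2))
end

section
/- Let φ : ℝⁿ → ℝ be continuous and ψ : ℝⁿ → ℝ ∪ {+∞} proper lower semicontinuous with ψ(0) finite, and let p(Δ) := inf_{‖s‖ ≤ Δ} (φ(s) + ψ(s)). If Δ̄ > 0 and there exists a minimizer s̄ ∈ P(Δ̄) with ‖s̄‖ < Δ̄, then p is continuous at Δ̄; in particular p(Δ_k) → p(Δ̄) for every sequence Δ_k → Δ̄ with Δ_k ≥ 0. -/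
open Set Filter

/-- If `Δ̄ > 0` and some minimizer `s̄ ∈ P(Δ̄)` satisfies `‖s̄‖ < Δ̄`, then the
value function `p` is continuous at `Δ̄`; in particular `p(Δ_k) → p(Δ̄)` for every sequence
`Δ_k → Δ̄` with `Δ_k ≥ 0`. -/
theorem stmt_4 (n : ℕ)
    (φ : EuclideanSpace ℝ (Fin n) → ℝ) (hφ : Continuous φ)
    (ψ : EuclideanSpace ℝ (Fin n) → EReal)
    (hψ_ne_bot : ∀ s, ψ s ≠ ⊥)
    (hψ_lsc : LowerSemicontinuous ψ)
    (hψ0 : ψ 0 ≠ ⊤)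
    (p : ℝ → EReal)
    (hp : ∀ Δ : ℝ,
      p Δ = ⨅ s ∈ {s : EuclideanSpace ℝ (Fin n) | ‖s‖ ≤ Δ}, ((φ s : EReal) + ψ s))
    (P : ℝ → Set (EuclideanSpace ℝ (Fin n)))
    (hP : ∀ Δ : ℝ, P Δ = {s : EuclideanSpace ℝ (Fin n) | ‖s‖ ≤ Δ ∧
      ∀ t, ‖t‖ ≤ Δ → (φ s : EReal) + ψ s ≤ (φ t : EReal) + ψ t})
    (Δbar : ℝ) (hΔbar : 0 < Δbar)
    (sbar : EuclideanSpace ℝ (Fin n)) (hsbar : sbar ∈ P Δbar) (hsbarlt : ‖sbar‖ < Δbar) :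
    ContinuousAt p Δbar ∧
    ∀ Δ : ℕ → ℝ, (∀ k, 0 ≤ Δ k) → Tendsto Δ atTop (nhds Δbar) →
      Tendsto (fun k => p (Δ k)) atTop (nhds (p Δbar)) := by
  have hf : LowerSemicontinuous (fun s => (φ s : EReal) + ψ s) := by
    refine LowerSemicontinuous.add' ?_ hψ_lsc ?_
    · exact (continuous_coe_real_ereal.comp hφ).lowerSemicontinuous
    · intro x
      exact EReal.continuousAt_add (Or.inl (EReal.coe_ne_top _)) (Or.inl (EReal.coe_ne_bot _))
  rw [hP] at hsbar
  obtain ⟨hs1, hs2⟩ := hsbar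
  have hpe : p Δbar = (φ sbar : EReal) + ψ sbar := by
    rw [hp]
    apply le_antisymm
    · exact iInf₂_le sbar hs1
    · exact le_iInf₂ fun t ht => hs2 t ht
  have hc : ContinuousAt p Δbar := by
    refine tendsto_order.2 ⟨?_, ?_⟩
    · intro a ha
      obtain ⟨b, hab, hb⟩ := exists_between ha
      have hopen : IsOpen {s | b < (φ s : EReal) + ψ s} := hf.isOpen_preimage b
      have hsub : Metric.closedBall (0 : EuclideanSpace ℝ (Fin n)) Δbar ⊆
          {s | b < (φ s : EReal) + ψ s} := by
        intro t ht
        rw [hpe] at hb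
        exact lt_of_lt_of_le hb (hs2 t (by simpa using ht))
      obtain ⟨δ, hδ, hδs⟩ :=
        (isCompact_closedBall (0 : EuclideanSpace ℝ (Fin n)) Δbar).exists_cthickening_subset_open
          hopen hsub
      rw [cthickening_closedBall hδ.le hΔbar.le] at hδs
      filter_upwards [Iio_mem_nhds (show Δbar < δ + Δbar by linarith)] with Δ hΔ
      refine lt_of_lt_of_le hab ?_
      rw [hp]
      refine le_iInf₂ fun t ht => ?_
      have h1 : ‖t‖ ≤ Δ := ht
      have h2 : Δ < δ + Δbar := hΔ
      have h3 : t ∈ Metric.closedBall (0 : EuclideanSpace ℝ (Fin n)) (δ + Δbar) := by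
        rw [mem_closedBall_zero_iff]; linarith
      exact le_of_lt (hδs h3)
    · intro a ha
      filter_upwards [Ioi_mem_nhds hsbarlt] with Δ hΔ
      refine lt_of_le_of_lt ?_ ha
      rw [hpe, hp]
      have h1 : ‖sbar‖ ≤ Δ := le_of_lt (mem_Ioi.1 hΔ)
      exact iInf₂_le sbar h1
  exact ⟨hc, fun Δ _ hΔ => hc.tendsto.comp hΔ⟩
end

section
/- Let f : ℝⁿ → ℝ be continuously differentiable, x ∈ ℝⁿ, and write g := ∇f(x). Let φ : ℝⁿ → ℝ be continuously differentiable with φ(0) = f(x), ∇φ(0) = g, and ∇φ Lipschitz continuous with constant L > 0. Let ψ : ℝⁿ → ℝ ∪ {+∞} be proper lower semicontinuous with ψ(0) = h(x) finite, and let ν > 0, Δ > 0. If s₁ is a global minimizer of (2ν)⁻¹‖s + νg‖² + ψ(s) over the ball {s : ‖s‖ ≤ Δ}, then φ(s₁) + ψ(s₁) ≤ f(x) + h(x) − ½(ν⁻¹ − L)‖s₁‖². -/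
theorem descent_aux {n : ℕ} (φ : EuclideanSpace ℝ (Fin n) → ℝ) (hφ : ContDiff ℝ 1 φ) (L : ℝ)
    (hlip : ∀ a b : EuclideanSpace ℝ (Fin n),
      ‖gradient φ a - gradient φ b‖ ≤ L * ‖a - b‖) (s : EuclideanSpace ℝ (Fin n)) :
    φ s ≤ φ 0 + inner ℝ (gradient φ 0) s + L / 2 * ‖s‖ ^ 2 := by
  have hd : ∀ t : ℝ, HasDerivAt
      (fun t : ℝ => φ (t • s) - t * inner ℝ (gradient φ 0) s - t ^ 2 * (L / 2 * ‖s‖ ^ 2))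
      (inner ℝ (gradient φ (t • s)) s - inner ℝ (gradient φ 0) s - 2 * t * (L / 2 * ‖s‖ ^ 2)) t := by
    intro t
    have h1 : HasFDerivAt φ (fderiv ℝ φ (t • s)) (t • s) :=
      ((hφ.differentiable (by norm_num)) (t • s)).hasFDerivAt
    have h2 : HasDerivAt (fun t : ℝ => t • s) s t := by
      simpa using (hasDerivAt_id t).smul_const s
    have h3 := h1.comp_hasDerivAt t h2
    have e : inner ℝ (gradient φ (t • s)) s = fderiv ℝ φ (t • s) s := by
      simp [gradient]
    rw [e]
    have h4 := (hasDerivAt_id t).mul_const (inner ℝ (gradient φ 0) s)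
    have h5 := ((hasDerivAt_id t).pow 2).mul_const (L / 2 * ‖s‖ ^ 2)
    exact ((h3.sub h4).sub h5).congr_deriv (by simp)
  have ha := antitoneOn_of_deriv_nonpos (convex_Ici (0:ℝ))
    (fun t _ => (hd t).continuousAt.continuousWithinAt)
    (fun t _ => (hd t).differentiableAt.differentiableWithinAt)
    (fun t ht => by
      rw [(hd t).deriv, ← inner_sub_left]
      have ht' : 0 < t := by simpa using ht
      have h1 := real_inner_le_norm (gradient φ (t • s) - gradient φ 0) s
      have h2 := hlip (t • s) 0
      rw [sub_zero, norm_smul, Real.norm_of_nonneg ht'.le] at h2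
      have h3 := mul_le_mul_of_nonneg_right h2 (norm_nonneg s)
      nlinarith)
  have := ha (show (0:ℝ) ∈ Set.Ici 0 by simp) (show (1:ℝ) ∈ Set.Ici 0 by simp) zero_le_one
  simp only [one_smul, zero_smul, one_mul, zero_mul, one_pow, sub_zero, ne_eq, OfNat.ofNat_ne_zero,
    not_false_eq_true, zero_pow] at this
  linarith

/-- Decrease obtained by one proximal-gradient step. If `s₁` globally minimizes
`(2ν)⁻¹‖s + νg‖² + ψ(s)` over the ball of radius `Δ`, where `g = ∇f(x)`, and `φ` is a `C¹`
model of `f` about `x` with `φ(0) = f(x)`, `∇φ(0) = g` and `∇φ` `L`-Lipschitz, then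
`φ(s₁) + ψ(s₁) ≤ f(x) + h(x) − ½(ν⁻¹ − L)‖s₁‖²`. -/
theorem stmt_7 (n : ℕ)
    (f : EuclideanSpace ℝ (Fin n) → ℝ) (hf : ContDiff ℝ 1 f)
    (x : EuclideanSpace ℝ (Fin n))
    (g : EuclideanSpace ℝ (Fin n)) (hg : g = gradient f x)
    (φ : EuclideanSpace ℝ (Fin n) → ℝ) (hφ : ContDiff ℝ 1 φ)
    (hφ0 : φ 0 = f x) (hφg : gradient φ 0 = g)
    (L : ℝ) (hL : 0 < L)
    (hφlip : ∀ a b : EuclideanSpace ℝ (Fin n),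
      ‖gradient φ a - gradient φ b‖ ≤ L * ‖a - b‖)
    (h : EuclideanSpace ℝ (Fin n) → EReal) (hx : ℝ) (hhx : h x = (hx : EReal))
    (ψ : EuclideanSpace ℝ (Fin n) → EReal)
    (hψ_ne_bot : ∀ s, ψ s ≠ ⊥)
    (hψ_lsc : LowerSemicontinuous ψ)
    (hψ0 : ψ 0 = (hx : EReal))
    (ν Δ : ℝ) (hν : 0 < ν) (hΔ : 0 < Δ)
    (s₁ : EuclideanSpace ℝ (Fin n)) (hs₁ball : ‖s₁‖ ≤ Δ)
    (hs₁min : ∀ t : EuclideanSpace ℝ (Fin n), ‖t‖ ≤ Δ →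
      (((2 * ν)⁻¹ * ‖s₁ + ν • g‖ ^ 2 : ℝ) : EReal) + ψ s₁ ≤
        (((2 * ν)⁻¹ * ‖t + ν • g‖ ^ 2 : ℝ) : EReal) + ψ t) :
    (φ s₁ : EReal) + ψ s₁ ≤
      ((f x + hx - (1 / 2) * (ν⁻¹ - L) * ‖s₁‖ ^ 2 : ℝ) : EReal) := by
  have hm := hs₁min 0 (by simpa using hΔ.le)
  have hd := descent_aux φ hφ L hφlip s₁
  rw [hφ0, hφg] at hd
  rw [hψ0] at hm
  cases hy : ψ s₁ with
  | bot => exact absurd hy (hψ_ne_bot s₁)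
  | top =>
    rw [hy, EReal.coe_add_top, ← EReal.coe_add] at hm
    exact absurd hm (not_le.2 (EReal.coe_lt_top _))
  | coe y =>
    rw [hy, ← EReal.coe_add, ← EReal.coe_add, EReal.coe_le_coe_iff] at hm
    rw [← EReal.coe_add, EReal.coe_le_coe_iff]
    rw [zero_add, norm_add_sq_real, inner_smul_right, real_inner_comm] at hm
    have e : (2 * ν)⁻¹ * (‖s₁‖ ^ 2 + 2 * (ν * inner ℝ g s₁) + ‖ν • g‖ ^ 2) =
        1 / 2 * ν⁻¹ * ‖s₁‖ ^ 2 + inner ℝ g s₁ + (2 * ν)⁻¹ * ‖ν • g‖ ^ 2 := by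
      field_simp
    rw [e] at hm
    linarith
end

section
/- Let g : ℝᵐ → ℝ be Lipschitz continuous with constant L > 0 and let c : ℝⁿ → ℝᵐ be differentiable with derivative (Jacobian) x ↦ c′(x) Lipschitz continuous with constant M > 0. Define h(x) := g(c(x)) and the model ψ(s;x) := g(c(x) + c′(x)s). Then for every x, s ∈ ℝⁿ, |h(x + s) − ψ(s;x)| ≤ ½ L M ‖s‖². -/
/-- If `g` is `L`-Lipschitz and `c` is differentiable with `M`-Lipschitz
Jacobian, then the model `ψ(s;x) = g(c(x) + c′(x)s)` of `h = g ∘ c` satisfies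
`|h(x+s) − ψ(s;x)| ≤ ½ L M ‖s‖²`. -/
theorem stmt_8 (n m : ℕ)
    (g : EuclideanSpace ℝ (Fin m) → ℝ) (L : ℝ) (hL : 0 < L)
    (hg : ∀ y z : EuclideanSpace ℝ (Fin m), |g y - g z| ≤ L * ‖y - z‖)
    (c : EuclideanSpace ℝ (Fin n) → EuclideanSpace ℝ (Fin m))
    (hc : Differentiable ℝ c)
    (M : ℝ) (hM : 0 < M)
    (hJ : ∀ a b : EuclideanSpace ℝ (Fin n), ‖fderiv ℝ c a - fderiv ℝ c b‖ ≤ M * ‖a - b‖)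
    (x s : EuclideanSpace ℝ (Fin n)) :
    |g (c (x + s)) - g (c x + (fderiv ℝ c x) s)| ≤ (1 / 2) * L * M * ‖s‖ ^ 2 := by
  have hd : ∀ t : ℝ, HasDerivAt (fun t : ℝ => c (x + t • s) - c x - t • (fderiv ℝ c x) s)
      ((fderiv ℝ c (x + t • s)) s - (fderiv ℝ c x) s) t := by
    intro t
    have h1 : HasDerivAt (fun t : ℝ => x + t • s) s t := by
      simpa using ((hasDerivAt_id t).smul_const s).const_add x
    have h2 := (hc (x + t • s)).hasFDerivAt.comp_hasDerivAt t h1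
    have h3 : HasDerivAt (fun t : ℝ => t • (fderiv ℝ c x) s) ((fderiv ℝ c x) s) t := by
      simpa using (hasDerivAt_id t).smul_const ((fderiv ℝ c x) s)
    exact (h2.sub_const (c x)).sub h3
  have hB : ∀ t : ℝ, HasDerivAt (fun t : ℝ => (1 / 2) * M * ‖s‖ ^ 2 * t ^ 2)
      (M * ‖s‖ ^ 2 * t) t := by
    intro t
    have h := (hasDerivAt_pow 2 t).const_mul ((1 / 2) * M * ‖s‖ ^ 2)
    have e : (1 / 2) * M * ‖s‖ ^ 2 * (((2 : ℕ) : ℝ) * t ^ (2 - 1)) = M * ‖s‖ ^ 2 * t := by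
      norm_num
      ring
    rw [← e]
    exact h
  have key := image_norm_le_of_norm_deriv_right_le_deriv_boundary (a := 0) (b := 1)
    (fun t _ => (hd t).continuousAt.continuousWithinAt)
    (fun t _ => (hd t).hasDerivWithinAt) (by simp) hB
    (by
      intro t ht
      have h1 := hJ (x + t • s) x
      rw [add_sub_cancel_left, norm_smul, Real.norm_of_nonneg ht.1] at h1
      have h2 := (fderiv ℝ c (x + t • s) - fderiv ℝ c x).le_opNorm s
      rw [sub_apply] at h2
      calc _ ≤ _ := h2
        _ ≤ (M * (t * ‖s‖)) * ‖s‖ := by gcongr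
        _ = _ := by ring)
    (x := 1) (by simp)
  simp only [one_smul, one_pow, mul_one, sub_sub] at key
  calc _ ≤ _ := hg _ _
    _ ≤ L * ((1 / 2) * M * ‖s‖ ^ 2) := by gcongr
    _ = _ := by ring
end

section
/- Let x, s, s₁ ∈ ℝⁿ, Δ > 0, α > 0, β ≥ 1, κ_m > 0, κ_mdc ∈ (0,1), and real numbers ξ > 0, m₀, m_s, F, F₊ (representing ξ(Δ;x,ν), m(0;x), m(s;x), f(x)+h(x), and f(x+s)+h(x+s)). Assume: (i) |F₊ − m_s| ≤ κ_m‖s‖²; (ii) m₀ − m_s ≥ κ_mdc ξ; (iii) ξ ≥ (2αΔ)⁻¹‖s₁‖²; (iv) ‖s‖ ≤ β‖s₁‖; (v) m₀ = F. Then the ratio ρ := (F − F₊)/(m₀ − m_s) satisfies |ρ − 1| ≤ (2 κ_m α β² / κ_mdc) Δ. In particular, for any η₂ ∈ (0,1), if Δ ≤ κ_mdc(1 − η₂)/(2 κ_m α β²) then ρ ≥ η₂. -/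
/-- The key quantitative estimate behind the "very successful iteration"
threshold: under the model-adequacy, model-decrease, proximal-gradient-decrease and step
bound conditions, the ratio `ρ = (F − Fplus)/(m₀ − m_s)` satisfies
`|ρ − 1| ≤ (2 κ_m α β² / κ_mdc) Δ`; in particular `Δ ≤ κ_mdc(1 − η₂)/(2 κ_m α β²)` implies
`ρ ≥ η₂` for any `η₂ ∈ (0,1)`. -/
theorem stmt_9 (n : ℕ)
    (x s s₁ : EuclideanSpace ℝ (Fin n))
    (Δ α β κm κmdc : ℝ)
    (hΔ : 0 < Δ) (hα : 0 < α) (hβ : 1 ≤ β)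
    (hκm : 0 < κm) (hκmdc : 0 < κmdc) (hκmdc1 : κmdc < 1)
    (ξ m₀ ms F Fplus : ℝ) (hξ : 0 < ξ)
    (hmodel : |Fplus - ms| ≤ κm * ‖s‖ ^ 2)
    (hdec : m₀ - ms ≥ κmdc * ξ)
    (hξlb : ξ ≥ (2 * α * Δ)⁻¹ * ‖s₁‖ ^ 2)
    (hstep : ‖s‖ ≤ β * ‖s₁‖)
    (hm₀ : m₀ = F) :
    |(F - Fplus) / (m₀ - ms) - 1| ≤ (2 * κm * α * β ^ 2 / κmdc) * Δ ∧
    ∀ η₂ : ℝ, 0 < η₂ → η₂ < 1 → Δ ≤ κmdc * (1 - η₂) / (2 * κm * α * β ^ 2) →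
      η₂ ≤ (F - Fplus) / (m₀ - ms) := by
  subst hm₀
  have hβ0 : 0 < β := by linarith
  have hD : 0 < m₀ - ms := lt_of_lt_of_le (by positivity) hdec
  have h1 : ‖s₁‖ ^ 2 ≤ 2 * α * Δ * ξ := by
    have hp : 0 < 2 * α * Δ := by positivity
    have h := mul_le_mul_of_nonneg_left hξlb hp.le
    rwa [mul_inv_cancel_left₀ hp.ne'] at h
  have h2 : ‖s‖ ^ 2 ≤ β ^ 2 * ‖s₁‖ ^ 2 := by
    rw [← mul_pow]
    exact pow_le_pow_left₀ (norm_nonneg _) hstep 2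
  have hK : 0 < 2 * κm * α * β ^ 2 := by positivity
  have key : |(m₀ - Fplus) / (m₀ - ms) - 1| ≤ (2 * κm * α * β ^ 2 / κmdc) * Δ := by
    have e : (m₀ - Fplus) / (m₀ - ms) - 1 = -(Fplus - ms) / (m₀ - ms) := by
      field_simp
      ring
    rw [e, abs_div, abs_neg, abs_of_pos hD, div_le_iff₀ hD]
    calc |Fplus - ms| ≤ κm * ‖s‖ ^ 2 := hmodel
      _ ≤ κm * (β ^ 2 * (2 * α * Δ * ξ)) := by
        refine mul_le_mul_of_nonneg_left (h2.trans ?_) hκm.le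
        exact mul_le_mul_of_nonneg_left h1 (by positivity)
      _ = (2 * κm * α * β ^ 2 / κmdc) * Δ * (κmdc * ξ) := by
        field_simp
      _ ≤ _ := mul_le_mul_of_nonneg_left hdec (by positivity)
  refine ⟨key, fun η₂ _ _ h => ?_⟩
  have h3 : (2 * κm * α * β ^ 2 / κmdc) * Δ ≤ 1 - η₂ := by
    rw [le_div_iff₀ hK] at h
    rw [div_mul_eq_mul_div, div_le_iff₀ hκmdc]
    linarith
  have h4 := (abs_le.mp key).1
  linarith
end

section
/- Let 0 < γ₁ < 1, Δ_succ > 0, and let (Δ_k)_{k∈ℕ} be a sequence of positive reals such that Δ_{k+1} ≥ γ₁ Δ_k for every k, and Δ_{k+1} ≥ Δ_k whenever Δ_k ≤ Δ_succ. Then Δ_k ≥ Δ_min := min(Δ₀, γ₁ Δ_succ) for every k ∈ ℕ. -/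
/-- Uniform lower bound on the trust-region radii: if each iteration shrinks
the radius at most by the factor `γ₁ ∈ (0,1)`, and the radius never decreases once it is
below `Δ_succ`, then `Δ_k ≥ Δ_min := min(Δ₀, γ₁ Δ_succ)` for all `k`. -/
theorem stmt_11 (γ₁ Δsucc : ℝ) (hγ₁ : 0 < γ₁) (hγ₁1 : γ₁ < 1) (hΔsucc : 0 < Δsucc)
    (Δ : ℕ → ℝ) (hΔpos : ∀ k, 0 < Δ k)
    (hfactor : ∀ k, γ₁ * Δ k ≤ Δ (k + 1))
    (hsucc : ∀ k, Δ k ≤ Δsucc → Δ k ≤ Δ (k + 1)) :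
    ∀ k, min (Δ 0) (γ₁ * Δsucc) ≤ Δ k := by
  intro k
  induction k with
  | zero => exact min_le_left _ _
  | succ k ih =>
    rcases le_total (Δ k) Δsucc with h | h
    · exact ih.trans (hsucc k h)
    · exact (min_le_right _ _).trans
        ((mul_le_mul_of_nonneg_left h hγ₁.le).trans (hfactor k))
end

section
/- Let 0 < γ₂ < 1 < γ₄, Δ₀ > 0, and 0 < Δ_min ≤ Δ₀. Let U and S be natural numbers (the counts of unsuccessful and successful iterations before the stopping test is first met) such that Δ_min ≤ Δ₀ · γ₂^U · γ₄^S. Then U ≤ log(Δ_min/Δ₀)/log(γ₂) + S · |log(γ₄)/log(γ₂)|. -/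
/-- Lemma on unsuccessful iterations, arithmetic core: if
`Δ_min ≤ Δ₀ γ₂^U γ₄^S` with `0 < γ₂ < 1 < γ₄`, `Δ₀ > 0` and `0 < Δ_min ≤ Δ₀`, then
`U ≤ log(Δ_min/Δ₀)/log γ₂ + S |log γ₄ / log γ₂|`. -/
theorem stmt_14 (γ₂ γ₄ Δ₀ Δmin : ℝ)
    (hγ₂0 : 0 < γ₂) (hγ₂ : γ₂ < 1) (hγ₄ : 1 < γ₄)
    (hΔ₀ : 0 < Δ₀) (hΔmin0 : 0 < Δmin) (hΔmin : Δmin ≤ Δ₀)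
    (U S : ℕ)
    (hUS : Δmin ≤ Δ₀ * γ₂ ^ U * γ₄ ^ S) :
    (U : ℝ) ≤ Real.log (Δmin / Δ₀) / Real.log γ₂ +
      (S : ℝ) * |Real.log γ₄ / Real.log γ₂| := by
  have h2 : Real.log γ₂ < 0 := Real.log_neg hγ₂0 hγ₂
  have h4 : 0 < Real.log γ₄ := Real.log_pos hγ₄
  have hg4 : 0 < γ₄ := by linarith
  have hl := Real.log_le_log hΔmin0 hUS
  rw [Real.log_mul (by positivity) (by positivity), Real.log_mul (by positivity) (by positivity),
    Real.log_pow, Real.log_pow] at hl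
  rw [abs_of_neg (div_neg_of_pos_of_neg h4 h2), Real.log_div hΔmin0.ne' hΔ₀.ne']
  have e : (Real.log Δmin - Real.log Δ₀) / Real.log γ₂ + (S : ℝ) * -(Real.log γ₄ / Real.log γ₂)
      = (Real.log Δmin - Real.log Δ₀ - S * Real.log γ₄) / Real.log γ₂ := by ring
  rw [e, le_div_iff_of_neg h2]
  linarith
end

section
/- Consider the nonsmooth regularized trust-region algorithm with infinitely many successful iterations, ν_k ≥ ν_min > 0 for all k, and f(x_k) + h(x_k) ≥ (f+h)_low for all k. Fix ε ∈ (0,1), let k(ε) be the first iteration index at which ν_k⁻¹ ξ(Δ_min; x_k, ν_k)^{1/2} ≤ ε, S(ε) := {k < k(ε) : ρ_k ≥ η₁}, U(ε) := {k < k(ε) : ρ_k < η₁}. Then |S(ε)| + |U(ε)| ≤ log(Δ_min/Δ₀)/log(γ₂) + (1 + |log(γ₄)/log(γ₂)|) · (f(x₀) + h(x₀) − (f+h)_low)/(η₁ κ_mdc ν_min² ε²); in particular the number of iterations before the stopping criterion ν_k⁻¹ ξ(Δ_min; x_k, ν_k)^{1/2} ≤ ε is first attained is O(ε⁻²). -/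
/-- Complexity bound: with infinitely many successful iterations,
`ν_k ≥ ν_min > 0` and `f(x_k) + h(x_k) ≥ (f+h)_low`, the total number of iterations
before the stopping test `ν_k⁻¹ ξ(Δ_min; x_k, ν_k)^{1/2} ≤ ε` is first met satisfies
`|S(ε)| + |U(ε)| ≤ log(Δ_min/Δ₀)/log γ₂ + (1 + |log γ₄/log γ₂|) (F₀ − F_low)/(η₁ κ_mdc ν_min² ε²)`,
an `O(ε⁻²)` bound. Here `F k = f(x_k)+h(x_k)`, `dm k` is the predicted decrease,
`ξΔ k = ξ(Δ_k;x_k,ν_k)`, `ξmin k = ξ(Δ_min;x_k,ν_k)`. -/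
theorem stmt_15
    (η₁ η₂ γ₁ γ₂ γ₃ γ₄ α β κm κmdc : ℝ)
    (hη₁ : 0 < η₁) (hη₁₂ : η₁ ≤ η₂) (hη₂ : η₂ < 1)
    (hγ₁ : 0 < γ₁) (hγ₁₂ : γ₁ ≤ γ₂) (hγ₂ : γ₂ < 1) (hγ₃ : 1 < γ₃) (hγ₃₄ : γ₃ ≤ γ₄)
    (hα : 0 < α) (hβ : 1 ≤ β) (hκm : 0 < κm) (hκmdc : 0 < κmdc) (hκmdc1 : κmdc < 1)
    (Δsucc Δmin : ℝ)
    (hΔsucc : Δsucc = κmdc * (1 - η₂) / (2 * κm * α * β ^ 2))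
    (νmin Flow ε : ℝ) (hνmin : 0 < νmin) (hε : 0 < ε) (hε1 : ε < 1)
    (F ρ ν ξΔ ξmin dm Δ : ℕ → ℝ)
    (hΔ₀ : 0 < Δ 0)
    (hΔmin : Δmin = min (Δ 0) (γ₁ * Δsucc))
    (hΔlb : ∀ k, Δmin ≤ Δ k)
    -- successful iterations increase the radius by a factor of at most γ₄,
    -- unsuccessful iterations decrease it by a factor of at least γ₂
    (hΔsucc' : ∀ k, η₁ ≤ ρ k → Δ (k + 1) ≤ γ₄ * Δ k)
    (hΔunsucc : ∀ k, ρ k < η₁ → Δ (k + 1) ≤ γ₂ * Δ k)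
    (hν : ∀ k, νmin ≤ ν k) (hνpos : ∀ k, 0 < ν k)
    (hlow : ∀ k, Flow ≤ F k)
    (hξnn : ∀ k, 0 ≤ ξmin k)
    (hξmono : ∀ k, ξmin k ≤ ξΔ k)
    (hdm : ∀ k, κmdc * ξΔ k ≤ dm k)
    (hsuccdec : ∀ k, η₁ ≤ ρ k → η₁ * dm k ≤ F k - F (k + 1))
    (hmono : ∀ k, F (k + 1) ≤ F k)
    (hinf : {k : ℕ | η₁ ≤ ρ k}.Infinite)
    -- k(ε) is the first iteration at which ν_k⁻¹ ξ(Δ_min; x_k, ν_k)^{1/2} ≤ ε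
    (kε : ℕ)
    (hkε : ∀ k < kε, ε < (ν k)⁻¹ * Real.sqrt (ξmin k))
    (hkεmet : (ν kε)⁻¹ * Real.sqrt (ξmin kε) ≤ ε) :
    (((Finset.range kε).filter fun k => η₁ ≤ ρ k).card : ℝ) +
        (((Finset.range kε).filter fun k => ρ k < η₁).card : ℝ) ≤
      Real.log (Δmin / Δ 0) / Real.log γ₂ +
        (1 + |Real.log γ₄ / Real.log γ₂|) *
          ((F 0 - Flow) / (η₁ * κmdc * νmin ^ 2 * ε ^ 2)) := by
  have hγ₂0 : 0 < γ₂ := by linarith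
  have hγ₄0 : 1 < γ₄ := by linarith
  have hΔs : 0 < Δsucc := by
    rw [hΔsucc]
    have : 0 < 1 - η₂ := by linarith
    have : 0 < β := by linarith
    positivity
  have hΔm : 0 < Δmin := by
    rw [hΔmin]
    exact lt_min hΔ₀ (mul_pos hγ₁ hΔs)
  have hΔp : ∀ k, 0 < Δ k := fun k => lt_of_lt_of_le hΔm (hΔlb k)
  have hl2 : Real.log γ₂ < 0 := Real.log_neg hγ₂0 hγ₂
  have hl4 : 0 < Real.log γ₄ := Real.log_pos hγ₄0
  have hlogs : ∀ n : ℕ, Real.log (Δ n) ≤ Real.log (Δ 0) +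
      (((Finset.range n).filter fun k => η₁ ≤ ρ k).card : ℝ) * Real.log γ₄ +
      (((Finset.range n).filter fun k => ρ k < η₁).card : ℝ) * Real.log γ₂ := by
    intro n
    induction n with
    | zero => simp
    | succ n ih =>
      rw [Finset.range_add_one, Finset.filter_insert, Finset.filter_insert]
      by_cases h : η₁ ≤ ρ n
      · have h2 : ¬ ρ n < η₁ := not_lt.mpr h
        rw [if_pos h, if_neg h2, Finset.card_insert_of_notMem (by simp)]
        have := Real.log_le_log (hΔp (n+1)) (hΔsucc' n h)
        rw [Real.log_mul (by linarith) (hΔp n).ne'] at this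
        push_cast
        linarith
      · have h2 : ρ n < η₁ := not_le.mp h
        rw [if_neg h, if_pos h2, Finset.card_insert_of_notMem (by simp)]
        have := Real.log_le_log (hΔp (n+1)) (hΔunsucc n h2)
        rw [Real.log_mul (by linarith) (hΔp n).ne'] at this
        push_cast
        linarith
  have hdec : ∀ n : ℕ, n ≤ kε →
      (((Finset.range n).filter fun k => η₁ ≤ ρ k).card : ℝ) *
        (η₁ * κmdc * νmin ^ 2 * ε ^ 2) ≤ F 0 - F n := by
    intro n
    induction n with
    | zero => simp
    | succ n ih =>
      intro hn
      have ih := ih (by omega)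
      rw [Finset.range_add_one, Finset.filter_insert]
      by_cases h : η₁ ≤ ρ n
      · rw [if_pos h, Finset.card_insert_of_notMem (by simp)]
        have h1 := hkε n (by omega)
        rw [inv_mul_eq_div, lt_div_iff₀ (hνpos n)] at h1
        have h3 : ε * νmin ≤ Real.sqrt (ξmin n) :=
          (mul_le_mul_of_nonneg_left (hν n) hε.le).trans h1.le
        have h4 : (ε * νmin) ^ 2 ≤ ξmin n :=
          (Real.le_sqrt' (mul_pos hε hνmin)).mp h3
        have h5 : κmdc * (ε * νmin) ^ 2 ≤ dm n :=
          (mul_le_mul_of_nonneg_left (h4.trans (hξmono n)) hκmdc.le).trans (hdm n)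
        have h6 := (mul_le_mul_of_nonneg_left h5 hη₁.le).trans (hsuccdec n h)
        push_cast
        linarith
      · rw [if_neg h]
        linarith [hmono n]
  have hD : 0 < η₁ * κmdc * νmin ^ 2 * ε ^ 2 := by positivity
  have hS := hdec kε le_rfl
  have hU := hlogs kε
  have hm := Real.log_le_log hΔm (hΔlb kε)
  generalize (((Finset.range kε).filter fun k => η₁ ≤ ρ k).card : ℝ) = S at *
  generalize (((Finset.range kε).filter fun k => ρ k < η₁).card : ℝ) = U at *
  have hS' : S ≤ (F 0 - Flow) / (η₁ * κmdc * νmin ^ 2 * ε ^ 2) := by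
    rw [le_div_iff₀ hD]
    linarith [hlow kε]
  have hU' : U ≤ Real.log (Δmin / Δ 0) / Real.log γ₂ + |Real.log γ₄ / Real.log γ₂| * S := by
    rw [abs_of_neg (div_neg_of_pos_of_neg hl4 hl2), Real.log_div hΔm.ne' hΔ₀.ne']
    have : (Real.log Δmin - Real.log (Δ 0)) / Real.log γ₂ + -(Real.log γ₄ / Real.log γ₂) * S
        = (Real.log Δmin - Real.log (Δ 0) - S * Real.log γ₄) / Real.log γ₂ := by ring
    rw [this, le_div_iff_of_neg hl2]
    linarith
  have := mul_le_mul_of_nonneg_left hS' (abs_nonneg (Real.log γ₄ / Real.log γ₂))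
  linarith
end

section
/- Consider the nonsmooth regularized trust-region algorithm with infinitely many successful iterations and ν_k ≥ ν_min > 0 for all k. Then either f(x_k) + h(x_k) → −∞ as k → ∞, or liminf_{k→∞} ν_k⁻¹ ξ(Δ_min; x_k, ν_k)^{1/2} = 0. -/
open Filter

/-- liminf convergence: for the nonsmooth regularized trust-region
algorithm with infinitely many successful iterations and `ν_k ≥ ν_min > 0`, either
`f(x_k) + h(x_k) → −∞` or `liminf ν_k⁻¹ ξ(Δ_min; x_k, ν_k)^{1/2} = 0`.
Here `F k = f(x_k) + h(x_k)` (nonincreasing) and `ξmin k = ξ(Δ_min; x_k, ν_k) ≥ 0`, and on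
every successful iteration `F k − F (k+1) ≥ η₁ κ_mdc ξ(Δ_k;x_k,ν_k) ≥ η₁ κ_mdc ξmin k`. -/
theorem stmt_16
    (η₁ η₂ γ₁ γ₂ γ₃ γ₄ α β κmdc : ℝ)
    (hη₁ : 0 < η₁) (hη₁₂ : η₁ ≤ η₂) (hη₂ : η₂ < 1)
    (hγ₁ : 0 < γ₁) (hγ₁₂ : γ₁ ≤ γ₂) (hγ₂ : γ₂ < 1) (hγ₃ : 1 < γ₃) (hγ₃₄ : γ₃ ≤ γ₄)
    (hα : 0 < α) (hβ : 1 ≤ β) (hκmdc : 0 < κmdc) (hκmdc1 : κmdc < 1)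
    (νmin : ℝ) (hνmin : 0 < νmin)
    (F ρ ν ξmin : ℕ → ℝ)
    (hν : ∀ k, νmin ≤ ν k)
    (hξnn : ∀ k, 0 ≤ ξmin k)
    (hmono : ∀ k, F (k + 1) ≤ F k)
    (hsuccdec : ∀ k, η₁ ≤ ρ k → η₁ * κmdc * ξmin k ≤ F k - F (k + 1))
    (hinf : {k : ℕ | η₁ ≤ ρ k}.Infinite) :
    Tendsto F atTop atBot ∨
      liminf (fun k => (ν k)⁻¹ * Real.sqrt (ξmin k)) atTop = 0 := by
  rcases tendsto_of_antitone (antitone_nat_of_succ_le hmono) with h | ⟨l, hl⟩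
  · exact Or.inl h
  right
  have hd : Tendsto (fun k => F k - F (k + 1)) atTop (nhds 0) := by
    have := hl.sub (hl.comp (tendsto_add_atTop_nat 1))
    simpa using this
  have hfreq : ∀ ε : ℝ, 0 < ε →
      ∃ᶠ k in atTop, (ν k)⁻¹ * Real.sqrt (ξmin k) ≤ ε := by
    intro ε hε
    have hc : 0 < η₁ * κmdc := mul_pos hη₁ hκmdc
    have hpos : 0 < η₁ * κmdc * (ε * νmin) ^ 2 := by positivity
    have hev := hd.eventually (gt_mem_nhds hpos)
    have hS : ∃ᶠ k in atTop, η₁ ≤ ρ k := Nat.frequently_atTop_iff_infinite.mpr hinf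
    refine (hS.and_eventually hev).mono ?_
    rintro k ⟨hk, hk2⟩
    have h1 := (hsuccdec k hk).trans hk2.le
    have h2 : ξmin k ≤ (ε * νmin) ^ 2 := le_of_mul_le_mul_left h1 hc
    have h3 : Real.sqrt (ξmin k) ≤ ε * νmin := Real.sqrt_le_iff.mpr ⟨by positivity, h2⟩
    have hνk : 0 < ν k := hνmin.trans_le (hν k)
    rw [inv_mul_le_iff₀ hνk]
    nlinarith [hν k]
  have hnn : ∀ k, 0 ≤ (ν k)⁻¹ * Real.sqrt (ξmin k) := fun k =>
    mul_nonneg (inv_nonneg.mpr (hνmin.le.trans (hν k))) (Real.sqrt_nonneg _)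
  apply le_antisymm
  · refine le_of_forall_pos_le_add fun ε hε => ?_
    rw [zero_add]
    exact liminf_le_of_frequently_le (hfreq ε hε)
      (isBoundedUnder_of_eventually_ge (Eventually.of_forall hnn))
  · exact le_liminf_of_le (IsCoboundedUnder.of_frequently_le (hfreq 1 one_pos))
      (Eventually.of_forall hnn)
end
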